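/- Let p be a real number such that either 0 < p ≤ 0.346, or 1/3 < p < 1/2 and 2^{p/(1-p)}·( ((1-p)/p)^{1/(1-p)} − (1-p)/p ) − (1 + (3 − 1/p)/2)^{1/(1-p)} ≥ 0. Let q = p/(p−1) (so that 1/p + 1/q = 1 and q < 0). Then for every sequence (a_n)_{n≥1} of strictly positive reals, ∑_{n=1}^∞ ( ∑_{k=1}^n a_k/k )^q ≤ (p/(1-p))^q · ∑_{n=1}^∞ a_n^q. -/

import Mathlib

open scoped ENNReal

/-!
Put `r = p / (1 - p) = -q` and let `S n` be the inner sum. With the perspective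
`P (x, y) = x ^ (1 + r) * y ^ (-r)` of the convex function `t ↦ t ^ (1 + r)`, one proves by
induction on `N`
`∑_{n ≤ N} S n ^ (-r) + r * P (N + 1 - c, N + 1) * S N ^ (-r) ≤ r ^ (-r) * ∑_{n ≤ N} a n ^ (-r)`.
Since `P` is subadditive (Radon's inequality), the induction step reduces to
`1 + r * P (x + 1 - c, x + 1) ≤ r * P (x - c + 1 / r, x)`. This holds whenever `0 ≤ c ≤ 1` and
`2 * r * c ≤ 1`: the inequalities of Radon and Bernoulli reduce it to
`s ^ (-r) + (1 + 2 * r) * (s - 1) ≤ s ^ (1 + r)` for `1 ≤ s`.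

The case `N = 1` is `1 + r * P (2 - c, 2) ≤ r ^ (-r)`, which is weakest for the largest allowed `c`,
namely `min 1 (1 / (2 * r))`. For `r ≤ 1 / 2` it is the previous inequality at `x = c = 1`, and for
`c = 1 / (2 * r)` it is the displayed condition on `p`. On `1 / 2 ≤ r ≤ 9 / 17`, an interval that
reaches just beyond `p = 0.346`, its left side increases and its right side decreases in `r`, so it
need only be checked at `9 / 17`.
-/

section Perspective

/-- The perspective `y * (x / y) ^ (1 + r)` of the power function with exponent `1 + r`, written so
that it is a product of powers; meant for `0 ≤ x` and `0 < y`. -/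
noncomputable def rpowPerspective (r x y : ℝ) : ℝ := x ^ (1 + r) * y ^ (-r)

variable {r x y z : ℝ}

lemma rpowPerspective_nonneg (hx : 0 ≤ x) (hy : 0 ≤ y) : 0 ≤ rpowPerspective r x y :=
  mul_nonneg (Real.rpow_nonneg hx _) (Real.rpow_nonneg hy _)

lemma rpowPerspective_eq_mul_div_rpow (hx : 0 ≤ x) (hy : 0 < y) :
    rpowPerspective r x y = y * (x / y) ^ (1 + r) := by
  have hyr : y ^ r ≠ 0 := (Real.rpow_pos_of_pos hy r).ne'
  rw [rpowPerspective, Real.div_rpow hx hy.le, Real.rpow_neg hy.le, Real.rpow_add hy,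
    Real.rpow_one]
  field_simp

lemma rpowPerspective_self (hx : 0 < x) : rpowPerspective r x x = x := by
  rw [rpowPerspective_eq_mul_div_rpow hx.le hx, div_self hx.ne', Real.one_rpow, mul_one]

lemma rpowPerspective_mul_left (hz : 0 < z) (hx : 0 ≤ x) (hy : 0 < y) :
    rpowPerspective r (z * x) (z * y) = z * rpowPerspective r x y := by
  rw [rpowPerspective_eq_mul_div_rpow (by positivity) (by positivity),
    rpowPerspective_eq_mul_div_rpow hx hy, mul_div_mul_left _ _ hz.ne', mul_assoc]

lemma mul_rpowPerspective_one_div_one (hr : 0 < r) :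
    r * rpowPerspective r (1 / r) 1 = r ^ (-r) := by
  rw [rpowPerspective, Real.one_rpow, mul_one, one_div, Real.inv_rpow hr.le, Real.rpow_add hr,
    Real.rpow_one, Real.rpow_neg hr.le]
  field_simp

lemma rpowPerspective_div_pow {m n : ℕ} (hn : n ≠ 0) (hx : 0 ≤ x) (hy : 0 ≤ y) :
    rpowPerspective (m / n) x y ^ n = x ^ (n + m) / y ^ m := by
  have hn' : (n : ℝ) ≠ 0 := Nat.cast_ne_zero.mpr hn
  have hexp : (1 + m / n : ℝ) * n = (n + m : ℕ) := by push_cast; field_simp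
  rw [rpowPerspective, mul_pow, Real.rpow_neg hy, inv_pow, ← Real.rpow_mul_natCast hx,
    ← Real.rpow_mul_natCast hy, hexp, div_mul_cancel₀ _ hn', Real.rpow_natCast,
    Real.rpow_natCast, div_eq_mul_inv]

/-- Radon's inequality. -/
lemma rpowPerspective_add_le {x₁ x₂ y₁ y₂ : ℝ} (hr : 0 ≤ r) (hx₁ : 0 ≤ x₁) (hx₂ : 0 ≤ x₂)
    (hy₁ : 0 < y₁) (hy₂ : 0 < y₂) :
    rpowPerspective r (x₁ + x₂) (y₁ + y₂) ≤ rpowPerspective r x₁ y₁ + rpowPerspective r x₂ y₂ := by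
  have hconvex := (convexOn_rpow (p := 1 + r) (by linarith)).2
    (Set.mem_Ici.mpr (div_nonneg hx₁ hy₁.le)) (Set.mem_Ici.mpr (div_nonneg hx₂ hy₂.le))
    (show 0 ≤ y₁ / (y₁ + y₂) by positivity) (show 0 ≤ y₂ / (y₁ + y₂) by positivity)
    (by field_simp)
  simp only [smul_eq_mul] at hconvex
  rw [show y₁ / (y₁ + y₂) * (x₁ / y₁) + y₂ / (y₁ + y₂) * (x₂ / y₂) = (x₁ + x₂) / (y₁ + y₂) by
    field_simp] at hconvex
  rw [rpowPerspective_eq_mul_div_rpow (by positivity) (by positivity),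
    rpowPerspective_eq_mul_div_rpow hx₁ hy₁, rpowPerspective_eq_mul_div_rpow hx₂ hy₂]
  calc (y₁ + y₂) * ((x₁ + x₂) / (y₁ + y₂)) ^ (1 + r)
      ≤ (y₁ + y₂) * (y₁ / (y₁ + y₂) * (x₁ / y₁) ^ (1 + r)
          + y₂ / (y₁ + y₂) * (x₂ / y₂) ^ (1 + r)) := by gcongr
    _ = y₁ * (x₁ / y₁) ^ (1 + r) + y₂ * (x₂ / y₂) ^ (1 + r) := by field_simp

lemma rpowPerspective_add_add_le (hr : 0 ≤ r) (hx : 0 ≤ x) (hy : 0 < y) (hz : 0 ≤ z) :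
    rpowPerspective r (x + z) (y + z) ≤ rpowPerspective r x y + z := by
  rcases hz.eq_or_lt with rfl | hz
  · simp only [add_zero, le_refl]
  · simpa only [rpowPerspective_self hz] using rpowPerspective_add_le hr hx hz.le hy hz

lemma one_add_two_mul_le_rpow_add_rpow (hr : 0 ≤ r) (hx : 0 < x) :
    1 + 2 * r ≤ (1 + r) * x ^ r + r * x ^ (-r - 1) := by
  have hpow (t : ℝ) : Real.log x * t + 1 ≤ x ^ t := by
    rw [Real.rpow_def_of_pos hx]
    exact Real.add_one_le_exp _
  calc 1 + 2 * r
      = (1 + r) * (Real.log x * r + 1) + r * (Real.log x * (-r - 1) + 1) := by ring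
    _ ≤ (1 + r) * x ^ r + r * x ^ (-r - 1) := by gcongr <;> exact hpow _

lemma monotoneOn_rpow_sub_rpow_neg_sub_mul (hr : 0 ≤ r) :
    MonotoneOn (fun x : ℝ ↦ x ^ (1 + r) - x ^ (-r) - (1 + 2 * r) * x) (Set.Ioi 0) := by
  have hderiv (x : ℝ) (hx : 0 < x) :
      HasDerivAt (fun x : ℝ ↦ x ^ (1 + r) - x ^ (-r) - (1 + 2 * r) * x)
        ((1 + r) * x ^ r + r * x ^ (-r - 1) - (1 + 2 * r)) x := by
    refine (((Real.hasDerivAt_rpow_const (p := 1 + r) (Or.inl hx.ne')).sub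
      (Real.hasDerivAt_rpow_const (p := -r) (Or.inl hx.ne'))).sub
      ((hasDerivAt_id x).const_mul (1 + 2 * r))).congr_deriv ?_
    rw [add_sub_cancel_left]
    ring
  exact monotoneOn_of_hasDerivWithinAt_nonneg (convex_Ioi 0)
    (fun x hx ↦ (hderiv x hx).continuousAt.continuousWithinAt)
    (fun x hx ↦ (hderiv x (interior_subset hx)).hasDerivWithinAt)
    (fun x hx ↦ sub_nonneg.mpr (one_add_two_mul_le_rpow_add_rpow hr (interior_subset hx)))

lemma rpowPerspective_add_mul_sub_le_swap (hr : 0 ≤ r) (hx : 0 < x) (hxy : x ≤ y) :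
    rpowPerspective r x y + (1 + 2 * r) * (y - x) ≤ rpowPerspective r y x := by
  obtain ⟨s, rfl⟩ : ∃ s, y = x * s := ⟨y / x, by field_simp⟩
  have hs : 1 ≤ s := (le_mul_iff_one_le_right hx).mp hxy
  have hs₀ : 0 < s := by linarith
  have hmono := monotoneOn_rpow_sub_rpow_neg_sub_mul hr (Set.mem_Ioi.mpr one_pos)
    (Set.mem_Ioi.mpr hs₀) hs
  simp only [Real.one_rpow] at hmono
  have hleft : rpowPerspective r x (x * s) = x * s ^ (-r) := by
    simpa [rpowPerspective] using rpowPerspective_mul_left (r := r) hx zero_le_one hs₀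
  have hright : rpowPerspective r (x * s) x = x * s ^ (1 + r) := by
    simpa [rpowPerspective] using rpowPerspective_mul_left (r := r) hx hs₀.le one_pos
  calc rpowPerspective r x (x * s) + (1 + 2 * r) * (x * s - x)
      = x * (s ^ (-r) + (1 + 2 * r) * (s - 1)) := by rw [hleft]; ring
    _ ≤ x * s ^ (1 + r) := by gcongr; linarith
    _ = rpowPerspective r (x * s) x := hright.symm

lemma le_rpowPerspective (hr : 0 ≤ r) (hx : 0 < x) (hxy : x ≤ y) : y ≤ rpowPerspective r y x := by
  have hy : 0 < y := hx.trans_le hxy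
  calc y = rpowPerspective r y y := (rpowPerspective_self hy).symm
    _ ≤ rpowPerspective r y x :=
      mul_le_mul_of_nonneg_left (Real.rpow_le_rpow_of_nonpos hx hxy (neg_nonpos.mpr hr))
        (Real.rpow_nonneg hy.le _)

lemma rpowPerspective_add_mul_sub_le (hr : 0 ≤ r) (hx : 0 < x) (hxy : x ≤ y) (hyz : y ≤ z) :
    rpowPerspective r y x + (1 + r) * (z - y) ≤ rpowPerspective r z x := by
  have hy : 0 < y := hx.trans_le hxy
  have hbernoulli : 1 + (1 + r) * (z / y - 1) ≤ (z / y) ^ (1 + r) := by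
    have hz : 0 ≤ z / y := div_nonneg (hy.le.trans hyz) hy.le
    simpa only [add_sub_cancel] using
      one_add_mul_self_le_rpow_one_add (s := z / y - 1) (by linarith) (p := 1 + r) (by linarith)
  have hfactor : rpowPerspective r z x = rpowPerspective r y x * (z / y) ^ (1 + r) := by
    have := (Real.rpow_pos_of_pos hy (1 + r)).ne'
    rw [rpowPerspective, rpowPerspective, Real.div_rpow (hy.le.trans hyz) hy.le]
    field_simp
  have hslope : 0 ≤ (1 + r) * (z / y - 1) :=
    mul_nonneg (by linarith) (sub_nonneg.mpr ((one_le_div hy).mpr hyz))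
  calc rpowPerspective r y x + (1 + r) * (z - y)
      = rpowPerspective r y x + y * ((1 + r) * (z / y - 1)) := by field_simp
    _ ≤ rpowPerspective r y x + rpowPerspective r y x * ((1 + r) * (z / y - 1)) := by
        gcongr
        exact le_rpowPerspective hr hx hxy
    _ = rpowPerspective r y x * (1 + (1 + r) * (z / y - 1)) := by ring
    _ ≤ rpowPerspective r y x * (z / y) ^ (1 + r) := by
        gcongr
        exact rpowPerspective_nonneg hy.le hx.le
    _ = rpowPerspective r z x := hfactor.symm

lemma one_add_mul_rpowPerspective_le {c : ℝ} (hr : 0 < r) (hc₀ : 0 ≤ c) (hc₁ : c ≤ 1)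
    (hrc : 2 * r * c ≤ 1) (hx : 0 < x) :
    1 + r * rpowPerspective r (x + 1 - c) (x + 1) ≤ r * rpowPerspective r (x - c + 1 / r) x := by
  have hradon : rpowPerspective r (x + 1 - c) (x + 1) ≤
      rpowPerspective r x (x + c) + (1 - c) := by
    convert rpowPerspective_add_add_le hr.le hx.le (show 0 < x + c by linarith)
      (sub_nonneg.mpr hc₁) using 2 <;> ring
  have hswap : rpowPerspective r x (x + c) + (1 + 2 * r) * (x + c - x) ≤
      rpowPerspective r (x + c) x :=
    rpowPerspective_add_mul_sub_le_swap hr.le hx (by linarith)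
  have htangent : rpowPerspective r (x + c) x + (1 + r) * (x - c + 1 / r - (x + c)) ≤
      rpowPerspective r (x - c + 1 / r) x := by
    have : 2 * c ≤ 1 / r := by rw [le_div_iff₀ hr]; linarith
    exact rpowPerspective_add_mul_sub_le hr.le hx (by linarith) (by linarith)
  calc 1 + r * rpowPerspective r (x + 1 - c) (x + 1)
      ≤ 1 + r * (rpowPerspective r (x - c + 1 / r) x - (1 + r) * (x - c + 1 / r - (x + c))
          - (1 + 2 * r) * (x + c - x) + (1 - c)) := by gcongr; linarith
    _ = r * rpowPerspective r (x - c + 1 / r) x := by field_simp; ring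

end Perspective

section PartialSums

/-- The partial sum `∑_{k = 1}^n a k / k`, the inner sum of the theorem. -/
noncomputable def harmonicSum (a : ℕ → ℝ) (n : ℕ) : ℝ := ∑ k ∈ Finset.Icc 1 n, a k / (k : ℝ)

lemma harmonicSum_one (a : ℕ → ℝ) : harmonicSum a 1 = a 1 := by
  simp [harmonicSum]

lemma harmonicSum_succ (a : ℕ → ℝ) (n : ℕ) :
    harmonicSum a (n + 1) = harmonicSum a n + a (n + 1) / ((n + 1 : ℕ) : ℝ) :=
  Finset.sum_Icc_succ_top (by omega) _

lemma harmonicSum_succ_pos {a : ℕ → ℝ} (ha : ∀ n, 1 ≤ n → 0 < a n) (n : ℕ) :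
    0 < harmonicSum a (n + 1) := by
  refine Finset.sum_pos (fun k hk ↦ ?_) ⟨1, by simp⟩
  have hk₁ := (Finset.mem_Icc.mp hk).1
  exact div_pos (ha k hk₁) (by exact_mod_cast hk₁)

variable {r c : ℝ}

lemma rpow_neg_add_mul_rpow_neg_le {x S d : ℝ} (hr : 0 < r) (hc₀ : 0 ≤ c) (hc₁ : c ≤ 1)
    (hrc : 2 * r * c ≤ 1) (hx : 0 < x) (hcx : c ≤ x) (hS : 0 < S) (hd : 0 < d) :
    (S + d) ^ (-r) + r * rpowPerspective r (x + 1 - c) (x + 1) * (S + d) ^ (-r) ≤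
      r * rpowPerspective r (x - c) x * S ^ (-r) + r ^ (-r) * (x * d) ^ (-r) := by
  have hradon : rpowPerspective r (x - c + 1 / r) (S + d) ≤
      rpowPerspective r (x - c) S + rpowPerspective r (1 / r) d :=
    rpowPerspective_add_le hr.le (sub_nonneg.mpr hcx) (by positivity) hS hd
  calc (S + d) ^ (-r) + r * rpowPerspective r (x + 1 - c) (x + 1) * (S + d) ^ (-r)
      = (1 + r * rpowPerspective r (x + 1 - c) (x + 1)) * (S + d) ^ (-r) := by ring
    _ ≤ r * rpowPerspective r (x - c + 1 / r) x * (S + d) ^ (-r) := by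
        gcongr
        exact one_add_mul_rpowPerspective_le hr hc₀ hc₁ hrc hx
    _ = r * x ^ (-r) * rpowPerspective r (x - c + 1 / r) (S + d) := by
        simp only [rpowPerspective]; ring
    _ ≤ r * x ^ (-r) * (rpowPerspective r (x - c) S + rpowPerspective r (1 / r) d) := by gcongr
    _ = r * rpowPerspective r (x - c) x * S ^ (-r) + r ^ (-r) * (x * d) ^ (-r) := by
        rw [← mul_rpowPerspective_one_div_one hr, Real.mul_rpow hx.le hd.le]
        simp only [rpowPerspective, Real.one_rpow]
        ring

/-- The conditions on the shift `c` under which the weights `r * rpowPerspective r (n - c) n` make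
the induction on the length of the sum work; `base_le` is the inequality for a single term. -/
structure IsAdmissibleShift (r c : ℝ) : Prop where
  nonneg : 0 ≤ c
  le_one : c ≤ 1
  two_mul_mul_le_one : 2 * r * c ≤ 1
  base_le : 1 + r * rpowPerspective r (2 - c) 2 ≤ r ^ (-r)

variable {a : ℕ → ℝ}

lemma sum_harmonicSum_rpow_neg_add_le (hr : 0 < r) (hc : IsAdmissibleShift r c)
    (ha : ∀ n, 1 ≤ n → 0 < a n) (N : ℕ) :
    ∑ n ∈ Finset.range (N + 1), harmonicSum a (n + 1) ^ (-r) +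
        r * rpowPerspective r (N + 2 - c) (N + 2) * harmonicSum a (N + 1) ^ (-r) ≤
      r ^ (-r) * ∑ n ∈ Finset.range (N + 1), a (n + 1) ^ (-r) := by
  induction N with
  | zero =>
    have ha₁ : 0 ≤ a 1 ^ (-r) := (Real.rpow_pos_of_pos (ha 1 le_rfl) _).le
    simpa [harmonicSum_one, add_mul] using mul_le_mul_of_nonneg_right hc.base_le ha₁
  | succ N ih =>
    have hx : (0 : ℝ) < N + 2 := by positivity
    have hcx : c ≤ N + 2 := by linarith [hc.le_one, N.cast_nonneg (α := ℝ)]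
    have hd : 0 < a (N + 2) / (N + 2 : ℝ) := div_pos (ha _ (by omega)) hx
    have hstep := rpow_neg_add_mul_rpow_neg_le hr hc.nonneg hc.le_one hc.two_mul_mul_le_one
      hx hcx (harmonicSum_succ_pos ha N) hd
    have hsucc : harmonicSum a (N + 1 + 1) = harmonicSum a (N + 1) + a (N + 2) / (N + 2 : ℝ) := by
      rw [harmonicSum_succ]; push_cast; ring_nf
    rw [← hsucc, mul_div_cancel₀ _ hx.ne'] at hstep
    rw [Finset.sum_range_succ, Finset.sum_range_succ _ (N + 1), mul_add,
      show ((N + 1 : ℕ) : ℝ) + 2 = N + 2 + 1 by push_cast; ring]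
    linarith

lemma tsum_harmonicSum_rpow_neg_le (hr : 0 < r) (hc : IsAdmissibleShift r c)
    (ha : ∀ n, 1 ≤ n → 0 < a n) :
    ∑' n : ℕ, ENNReal.ofReal (harmonicSum a (n + 1) ^ (-r)) ≤
      ENNReal.ofReal (r ^ (-r)) * ∑' n : ℕ, ENNReal.ofReal (a (n + 1) ^ (-r)) := by
  have hS (n : ℕ) : 0 ≤ harmonicSum a (n + 1) ^ (-r) :=
    Real.rpow_nonneg (harmonicSum_succ_pos ha n).le _
  have ha' (n : ℕ) : 0 ≤ a (n + 1) ^ (-r) := Real.rpow_nonneg (ha _ (by omega)).le _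
  have hfinite (N : ℕ) : ∑ n ∈ Finset.range (N + 1), harmonicSum a (n + 1) ^ (-r) ≤
      r ^ (-r) * ∑ n ∈ Finset.range (N + 1), a (n + 1) ^ (-r) := by
    have hcN : c ≤ N + 2 := by linarith [hc.le_one, N.cast_nonneg (α := ℝ)]
    refine le_trans (le_add_of_nonneg_right ?_) (sum_harmonicSum_rpow_neg_add_le hr hc ha N)
    exact mul_nonneg (mul_nonneg hr.le
      (rpowPerspective_nonneg (sub_nonneg.mpr hcN) (by positivity))) (hS N)
  refine ENNReal.tsum_le_of_sum_range_le fun N ↦ ?_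
  calc ∑ n ∈ Finset.range N, ENNReal.ofReal (harmonicSum a (n + 1) ^ (-r))
      ≤ ∑ n ∈ Finset.range (N + 1), ENNReal.ofReal (harmonicSum a (n + 1) ^ (-r)) := by
        gcongr; exact N.le_succ
    _ = ENNReal.ofReal (∑ n ∈ Finset.range (N + 1), harmonicSum a (n + 1) ^ (-r)) :=
        (ENNReal.ofReal_sum_of_nonneg fun n _ ↦ hS n).symm
    _ ≤ ENNReal.ofReal (r ^ (-r) * ∑ n ∈ Finset.range (N + 1), a (n + 1) ^ (-r)) :=
        ENNReal.ofReal_le_ofReal (hfinite N)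
    _ = ENNReal.ofReal (r ^ (-r)) *
          ∑ n ∈ Finset.range (N + 1), ENNReal.ofReal (a (n + 1) ^ (-r)) := by
        rw [ENNReal.ofReal_mul (by positivity), ENNReal.ofReal_sum_of_nonneg fun n _ ↦ ha' n]
    _ ≤ ENNReal.ofReal (r ^ (-r)) * ∑' n : ℕ, ENNReal.ofReal (a (n + 1) ^ (-r)) := by
        gcongr; exact ENNReal.sum_le_tsum _

end PartialSums

section AdmissibleShifts

variable {r s : ℝ}

lemma isAdmissibleShift_one (hr₀ : 0 < r) (hr : r ≤ 1 / 2) : IsAdmissibleShift r 1 where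
  nonneg := zero_le_one
  le_one := le_rfl
  two_mul_mul_le_one := by linarith
  base_le := by
    have hstep := one_add_mul_rpowPerspective_le hr₀ zero_le_one le_rfl (by linarith) one_pos
    rwa [sub_self, zero_add, mul_rpowPerspective_one_div_one hr₀, one_add_one_eq_two] at hstep

lemma isAdmissibleShift_one_div_two_mul (hr : 1 / 2 ≤ r)
    (hbase : 1 + r * rpowPerspective r (2 - 1 / (2 * r)) 2 ≤ r ^ (-r)) :
    IsAdmissibleShift r (1 / (2 * r)) where
  nonneg := one_div_nonneg.mpr (by linarith)
  le_one := by rw [div_le_one (by linarith)]; linarith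
  two_mul_mul_le_one := (mul_one_div_cancel (by linarith)).le
  base_le := hbase

lemma one_add_mul_rpowPerspective_two_le_of_nonneg {c : ℝ} (hr : 0 < r)
    (h : 0 ≤ (2 : ℝ) ^ r * ((1 / r) ^ (1 + r) - 1 / r) - (2 - c) ^ (1 + r)) :
    1 + r * rpowPerspective r (2 - c) 2 ≤ r ^ (-r) := by
  have hle : rpowPerspective r (2 - c) 2 ≤ (1 / r) ^ (1 + r) - 1 / r := by
    rw [rpowPerspective, Real.rpow_neg zero_le_two, ← div_eq_mul_inv,
      div_le_iff₀' (by positivity)]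
    linarith
  calc 1 + r * rpowPerspective r (2 - c) 2
      ≤ 1 + r * ((1 / r) ^ (1 + r) - 1 / r) := by gcongr
    _ = r * rpowPerspective r (1 / r) 1 := by
        rw [rpowPerspective, Real.one_rpow]; field_simp; ring
    _ = r ^ (-r) := mul_rpowPerspective_one_div_one hr

lemma mul_rpow_neg_le_mul_rpow_neg {b : ℝ} (hb : 0 < b) (hr : 0 ≤ r) (hsr : s ≤ r)
    (hrb : r * Real.log b ≤ 1) : s * b ^ (-s) ≤ r * b ^ (-r) := by
  have hexp : s ≤ r * b ^ (s - r) := by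
    rw [Real.rpow_def_of_pos hb]
    calc s ≤ r * (Real.log b * (s - r) + 1) := by nlinarith
      _ ≤ r * Real.exp (Real.log b * (s - r)) := by gcongr; exact Real.add_one_le_exp _
  calc s * b ^ (-s) ≤ r * b ^ (s - r) * b ^ (-s) := by gcongr
    _ = r * b ^ (-r) := by rw [mul_assoc, ← Real.rpow_add hb]; ring_nf

lemma antitoneOn_rpow_neg_self :
    AntitoneOn (fun r : ℝ ↦ r ^ (-r)) (Set.Ici (Real.exp (-1))) := by
  intro s hs r _ hsr
  have hs₀ : 0 < s := (Real.exp_pos _).trans_le hs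
  have hr₀ : 0 < r := hs₀.trans_le hsr
  have hlog_s : -1 ≤ Real.log s := (Real.le_log_iff_exp_le hs₀).mpr hs
  have hlog_div : 1 - s / r ≤ Real.log r - Real.log s := by
    simpa only [Real.log_div hr₀.ne' hs₀.ne', inv_div] using
      Real.one_sub_inv_le_log_of_pos (div_pos hr₀ hs₀)
  have hlog_diff : r - s ≤ r * (Real.log r - Real.log s) := by
    calc r - s = r * (1 - s / r) := by field_simp
      _ ≤ r * (Real.log r - Real.log s) := by gcongr
  simp only [Real.rpow_def_of_pos hr₀, Real.rpow_def_of_pos hs₀, Real.exp_le_exp]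
  nlinarith [mul_nonneg (sub_nonneg.mpr hsr) (neg_le_iff_add_nonneg.mp hlog_s)]

lemma mul_rpowPerspective_two_sub_le (hs : 1 / 2 ≤ s) (hsr : s ≤ r) (hr : r ≤ 1) :
    s * rpowPerspective s (2 - 1 / (2 * s)) 2 ≤ r * rpowPerspective r (2 - 1 / (2 * r)) 2 := by
  have hs₀ : 0 < s := by linarith
  have hr₀ : 0 < r := by linarith
  have hlog : r * Real.log 2 ≤ 1 :=
    mul_le_one₀ hr (Real.log_nonneg one_le_two) (by linarith [Real.log_two_lt_d9])
  have hone : 1 ≤ 2 - 1 / (2 * s) := by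
    have : 1 / (2 * s) ≤ 1 := by rw [div_le_one (by positivity)]; linarith
    linarith
  have hbase : 2 - 1 / (2 * s) ≤ 2 - 1 / (2 * r) := by gcongr
  have hpow : (2 - 1 / (2 * s)) ^ (1 + s) ≤ (2 - 1 / (2 * r)) ^ (1 + r) :=
    (Real.rpow_le_rpow_of_exponent_le hone (by linarith)).trans
      (Real.rpow_le_rpow (by linarith) hbase (by linarith))
  calc s * rpowPerspective s (2 - 1 / (2 * s)) 2
      = s * 2 ^ (-s) * (2 - 1 / (2 * s)) ^ (1 + s) := by rw [rpowPerspective]; ring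
    _ ≤ r * 2 ^ (-r) * (2 - 1 / (2 * r)) ^ (1 + r) := by
        gcongr ?_ * ?_
        exact mul_rpow_neg_le_mul_rpow_neg two_pos hr₀.le hsr hlog
    _ = r * rpowPerspective r (2 - 1 / (2 * r)) 2 := by rw [rpowPerspective]; ring

lemma one_add_mul_rpowPerspective_nine_div_seventeen_le :
    1 + 9 / 17 * rpowPerspective (9 / 17) (2 - 1 / (2 * (9 / 17))) 2 ≤
      (9 / 17 : ℝ) ^ (-(9 / 17) : ℝ) := by
  have hpow {x y : ℝ} (hx : 0 ≤ x) (hy : 0 ≤ y) :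
      rpowPerspective (9 / 17) x y ^ 17 = x ^ 26 / y ^ 9 := by
    exact_mod_cast rpowPerspective_div_pow (m := 9) (n := 17) (by norm_num) hx hy
  have hupper : rpowPerspective (9 / 17) (2 - 1 / (2 * (9 / 17))) 2 ≤ 34 / 45 := by
    refine le_of_pow_le_pow_left₀ (n := 17) (by norm_num) (by norm_num) ?_
    rw [hpow (by norm_num) (by norm_num)]
    norm_num
  have hlower : 119 / 45 ≤ rpowPerspective (9 / 17) (1 / (9 / 17)) 1 := by
    refine le_of_pow_le_pow_left₀ (n := 17) (by norm_num)
      (rpowPerspective_nonneg (by norm_num) (by norm_num)) ?_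
    rw [hpow (by norm_num) (by norm_num)]
    norm_num
  rw [← mul_rpowPerspective_one_div_one (by norm_num)]
  linarith

lemma exists_isAdmissibleShift (hr₀ : 0 < r) (hr : r ≤ 9 / 17) : ∃ c, IsAdmissibleShift r c := by
  rcases le_total r (1 / 2) with hr_half | hr_half
  · exact ⟨1, isAdmissibleShift_one hr₀ hr_half⟩
  · refine ⟨1 / (2 * r), isAdmissibleShift_one_div_two_mul hr_half ?_⟩
    have hexp : Real.exp (-1) ≤ r := by linarith [Real.exp_neg_one_lt_half]
    calc 1 + r * rpowPerspective r (2 - 1 / (2 * r)) 2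
        ≤ 1 + 9 / 17 * rpowPerspective (9 / 17) (2 - 1 / (2 * (9 / 17))) 2 :=
          add_le_add_right (mul_rpowPerspective_two_sub_le hr_half hr (by norm_num)) 1
      _ ≤ (9 / 17) ^ (-(9 / 17) : ℝ) := one_add_mul_rpowPerspective_nine_div_seventeen_le
      _ ≤ r ^ (-r) := antitoneOn_rpow_neg_self hexp (hexp.trans hr) hr

end AdmissibleShifts

/-- Dual version: for `p` with `0 < p ≤ 0.346`, or `1/3 < p < 1/2` satisfying
condition (1.4), and `q = p/(p-1)`:
`∑_{n≥1} (∑_{k=1}^n a_k/k)^q ≤ (p/(1-p))^q ∑_{n≥1} a_n^q` for positive `a`. -/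
theorem stmt_2 (p q : ℝ)
    (hp : (0 < p ∧ p ≤ 0.346) ∨
      (1 / 3 < p ∧ p < 1 / 2 ∧
        0 ≤ (2 : ℝ) ^ (p / (1 - p)) *
            (((1 - p) / p) ^ ((1 : ℝ) / (1 - p)) - (1 - p) / p) -
            (1 + (3 - 1 / p) / 2) ^ ((1 : ℝ) / (1 - p))))
    (hq : q = p / (p - 1))
    (a : ℕ → ℝ) (ha : ∀ n, 1 ≤ n → 0 < a n) :
    ∑' n : ℕ, ENNReal.ofReal ((∑ k ∈ Finset.Icc 1 (n + 1), a k / (k : ℝ)) ^ q) ≤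
      ENNReal.ofReal ((p / (1 - p)) ^ q) * ∑' n : ℕ, ENNReal.ofReal (a (n + 1) ^ q) := by
  have hp₀ : 0 < p := by rcases hp with h | h <;> linarith [h.1]
  have hp₁ : 0 < 1 - p := by
    rcases hp with ⟨-, h⟩ | ⟨-, h, -⟩ <;> norm_num at h <;> linarith
  set r := p / (1 - p) with hr_def
  have hr : 0 < r := div_pos hp₀ hp₁
  have hqr : q = -r := by rw [hq, hr_def, ← div_neg, neg_sub]
  obtain ⟨c, hc⟩ : ∃ c, IsAdmissibleShift r c := by
    rcases hp with ⟨-, hp_le⟩ | ⟨hp_third, -, hcond⟩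
    · refine exists_isAdmissibleShift hr ?_
      rw [hr_def, div_le_iff₀ hp₁]
      norm_num at hp_le
      linarith
    · have hr_half : 1 / 2 ≤ r := by rw [hr_def, le_div_iff₀ hp₁]; linarith
      have hinv : (1 - p) / p = 1 / r := (one_div_div p (1 - p)).symm
      have hexponent : 1 / (1 - p) = 1 + r := by rw [hr_def]; field_simp; ring
      have hshift : 1 + (3 - 1 / p) / 2 = 2 - 1 / (2 * r) := by rw [hr_def]; field_simp; ring
      rw [hinv, hexponent, hshift] at hcond
      exact ⟨_, isAdmissibleShift_one_div_two_mul hr_half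
        (one_add_mul_rpowPerspective_two_le_of_nonneg hr hcond)⟩
  rw [hqr]
  exact tsum_harmonicSum_rpow_neg_le hr hc ha
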